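/- Let S be a skew lattice. The operation ∧ satisfies x∧y∧z = x∧z for all x,y,z ∈ S if and only if the identity x∧y = y∨x holds for all x,y ∈ S. -/

import Mathlib

/-!
If `∧` is rectangular, inserting the factor `y ∨ x` shows that `x ∧ y` and `y ∨ x` are both equal
to `x ∧ (y ∨ x)`: the first because `y ∧ (y ∨ x) = y`, the second because `(y ∨ x) ∧ x = x`.
Conversely, if `x ∧ y = y ∨ x`, then the absorption law `x ∧ (x ∨ y) = x` reads
`x ∧ (y ∧ x) = x`, which in a semigroup implies rectangularity.
-/

/-- The identity `x * y * z = x * z` defining rectangular bands among idempotent semigroups.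
Neither associativity nor idempotence of `op` is part of the definition. -/
def IsRectangular {S : Type*} (op : S → S → S) : Prop :=
  ∀ x y z : S, op (op x y) z = op x z

section Semigroup

variable {S : Type*} {op : S → S → S}

theorem IsRectangular.op_self_of_op_eq_left (h : IsRectangular op)
    (assoc : ∀ x y z : S, op (op x y) z = op x (op y z)) {x e : S} (hxe : op x e = x) :
    op x x = x :=
  calc op x x = op x (op x e) := by rw [hxe]
    _ = op (op x x) e := (assoc x x e).symm
    _ = op x e := h x x e
    _ = x := hxe

theorem isRectangular_of_op_op_self (assoc : ∀ x y z : S, op (op x y) z = op x (op y z))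
    (h : ∀ x y : S, op x (op y x) = x) : IsRectangular op := fun x y z =>
  calc op (op x y) z = op (op x y) (op z (op x z)) := by rw [h z x]
    _ = op (op x (op (op y z) x)) z := by simp only [assoc]
    _ = op x z := by rw [h x (op y z)]

end Semigroup

section Absorption

variable {S : Type*} {wedge vee : S → S → S}

theorem IsRectangular.wedge_eq_vee_swap (h : IsRectangular wedge)
    (wedge_assoc : ∀ x y z : S, wedge (wedge x y) z = wedge x (wedge y z))
    (wedge_vee_self : ∀ x y : S, wedge x (vee x y) = x)
    (vee_wedge_self : ∀ x y : S, wedge (vee y x) x = x) (x y : S) :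
    wedge x y = vee y x := by
  have wedge_self : wedge (vee y x) (vee y x) = vee y x :=
    h.op_self_of_op_eq_left wedge_assoc (wedge_vee_self (vee y x) x)
  calc wedge x y = wedge x (wedge y (vee y x)) := by rw [wedge_vee_self y x]
    _ = wedge (wedge x y) (vee y x) := (wedge_assoc x y _).symm
    _ = wedge x (vee y x) := h x y _
    _ = wedge (wedge (vee y x) x) (vee y x) := by rw [vee_wedge_self x y]
    _ = wedge (vee y x) (vee y x) := h _ x _
    _ = vee y x := wedge_self

theorem isRectangular_of_wedge_eq_vee_swap
    (wedge_assoc : ∀ x y z : S, wedge (wedge x y) z = wedge x (wedge y z))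
    (wedge_vee_self : ∀ x y : S, wedge x (vee x y) = x)
    (h : ∀ x y : S, wedge x y = vee y x) : IsRectangular wedge := by
  refine isRectangular_of_op_op_self wedge_assoc fun x y => ?_
  rw [h y x, wedge_vee_self x y]

theorem wedge_rectangular_iff_wedge_eq_vee_swap_general
    (wedge_assoc : ∀ x y z : S, wedge (wedge x y) z = wedge x (wedge y z))
    (wedge_vee_self : ∀ x y : S, wedge x (vee x y) = x)
    (vee_wedge_self : ∀ x y : S, wedge (vee y x) x = x) :
    IsRectangular wedge ↔ ∀ x y : S, wedge x y = vee y x :=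
  ⟨fun h => h.wedge_eq_vee_swap wedge_assoc wedge_vee_self vee_wedge_self,
    isRectangular_of_wedge_eq_vee_swap wedge_assoc wedge_vee_self⟩

end Absorption

/-- In a skew lattice, ∧ is rectangular iff x∧y = y∨x holds. -/
theorem wedge_rectangular_iff_wedge_eq_vee_swap {S : Type*} (wedge vee : S → S → S)
    (wedge_idem : ∀ x : S, wedge x x = x)
    (vee_idem : ∀ x : S, vee x x = x)
    (wedge_assoc : ∀ x y z : S, wedge (wedge x y) z = wedge x (wedge y z))
    (vee_assoc : ∀ x y z : S, vee (vee x y) z = vee x (vee y z))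
    (abs₁ : ∀ x y : S, wedge x (vee x y) = x)
    (abs₂ : ∀ x y : S, wedge (vee y x) x = x)
    (abs₃ : ∀ x y : S, vee x (wedge x y) = x)
    (abs₄ : ∀ x y : S, vee (wedge y x) x = x) :
    (∀ x y z : S, wedge (wedge x y) z = wedge x z) ↔
      (∀ x y : S, wedge x y = vee y x) :=
  wedge_rectangular_iff_wedge_eq_vee_swap_general wedge_assoc abs₁ abs₂
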